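/- (Conditional conformal validity, Remark 7.) Suppose the law of the data D over trajectories has probability mass function f(d) = ∏_{t=1}^T pC(c_t) · a_t(x_t; c_t, h_{t−1}(d)) · r(y_t; c_t, x_t), where pC : 𝒞 → ℝ≥0 is the (time-invariant) context law and r : 𝒴 × 𝒞 × 𝒳 → ℝ≥0 is a response law not depending on t (the non-stationarity null H₀^S). Take f̂(d) = ∏_{t=1}^T a_t(x_t; c_t, h_{t−1}(d)), and let q be any resampling distribution such that q(d̃ | d) > 0 implies both: (i) there exists a permutation π of {1, …, T} with d̃_t = d_{π(t)} for all t, and (ii) the final action is preserved, x̃_T = x_T. Then the p-value is valid conditionally on the final action: for every x ∈ 𝒳 and every α ∈ [0,1], Σ_{(d₀,…,d_m) : p(d₀,…,d_m) ≤ α and the T-th action of d₀ equals x} h(d₀,…,d_m) ≤ α · Σ_{d : the T-th action of d equals x} f(d). Equivalently, the prediction set obtained by inverting this test covers Y_T with probability at least 1 − α conditionally on X_T = x, for every x with positive probability. -/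

import Mathlib

open scoped NNReal Classical BigOperators

noncomputable section

/-! Generic weighted MC randomization test machinery. -/

/-- The joint law of the tuple: `h(d₀, …, d_m) = f(d₀) · ∏_{k=1}^m q(d_k | d₀)`. -/
def jointLaw {D : Type*} (f : D → ℝ≥0) (q : D → D → ℝ≥0) (m : ℕ)
    (d : Fin (m + 1) → D) : ℝ≥0 :=
  f (d 0) * ∏ k ∈ Finset.univ.erase (0 : Fin (m + 1)), q (d k) (d 0)

/-- Numerator of the weight `w_i`: `f̂(d_i) · ∏_{k ≠ i} q(d_k | d_i)`. -/
def wNum {D : Type*} (q : D → D → ℝ≥0) (fhat : D → ℝ≥0) (m : ℕ)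
    (i : Fin (m + 1)) (d : Fin (m + 1) → D) : ℝ≥0 :=
  fhat (d i) * ∏ k ∈ Finset.univ.erase i, q (d k) (d i)

/-- The weight `w_i`; in `ℝ≥0` division by zero yields `0`. -/
def weight {D : Type*} (q : D → D → ℝ≥0) (fhat : D → ℝ≥0) (m : ℕ)
    (i : Fin (m + 1)) (d : Fin (m + 1) → D) : ℝ≥0 :=
  wNum q fhat m i d / ∑ j, wNum q fhat m j d

/-- The weighted MC randomization p-value. -/
def pValue {D : Type*} (q : D → D → ℝ≥0) (fhat : D → ℝ≥0) (m : ℕ)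
    (S : D → ℝ) (d : Fin (m + 1) → D) : ℝ≥0 :=
  ∑ i, weight q fhat m i d * (if S (d 0) ≤ S (d i) then 1 else 0)

/-! Trajectory machinery. -/

variable {C X Y : Type*}

/-- Embedding of an index `s < t` into `Fin T`. -/
def emb {T : ℕ} (t : Fin T) (s : Fin (t : ℕ)) : Fin T :=
  ⟨(s : ℕ), lt_trans s.isLt t.isLt⟩

/-- The history `h_{t−1}(d)`. -/
def hist {T : ℕ} (d : Fin T → C × X × Y) (t : Fin T) : Fin (t : ℕ) → C × X × Y :=
  fun s => d (emb t s)

/-- `f̂(d) = ∏_{t=1}^T a_t(x_t; c_t, h_{t−1}(d))`. -/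
def assignLik {T : ℕ} (a : (t : Fin T) → X → C → (Fin (t : ℕ) → C × X × Y) → ℝ≥0)
    (d : Fin T → C × X × Y) : ℝ≥0 :=
  ∏ t, a t (d t).2.1 (d t).1 (hist d t)

/-- The data law in a `C`-stationary strongly non-reactive environment under the
stationarity null `H₀^S`: `f(d) = ∏_t pC(c_t) · a_t(x_t; c_t, h_{t−1}(d)) ·
r(y_t; c_t, x_t)` with `pC` and `r` not depending on `t`. -/
def statTrajLaw {T : ℕ}
    (pC : C → ℝ≥0)
    (a : (t : Fin T) → X → C → (Fin (t : ℕ) → C × X × Y) → ℝ≥0)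
    (r : Y → C → X → ℝ≥0)
    (d : Fin T → C × X × Y) : ℝ≥0 :=
  ∏ t, pC (d t).1 * a t (d t).2.1 (d t).1 (hist d t) *
    r (d t).2.2 (d t).1 (d t).2.1

/-! Write `f = G · f̂` with `G` constant along resampling; here `G` is the context-response
likelihood, which only depends on the multiset of observations, restricted to the event `X_T = x`.
Then, given the unordered tuple, the posterior probability that `dᵢ` is the original data set is
exactly `wᵢ`. Symmetrizing over the transpositions `(0 i)` therefore replaces the event `p ≤ α` by
the total weight of those `i` whose upper tail `{k | S (dᵢ) ≤ S (dₖ)}` has weight at most `α`. Those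
`i` all lie in the upper tail of the one with smallest `S`, so their total weight is at most `α`. -/

open scoped ENNReal

theorem sum_filter_upperTail_le {ι β M : Type*} [Fintype ι] [LinearOrder β] [AddCommMonoid M]
    [PartialOrder M] [IsOrderedAddMonoid M] [CanonicallyOrderedAdd M] [DecidableLE M]
    (w : ι → M) (s : ι → β) (α : M) :
    ∑ i with ∑ k with s i ≤ s k, w k ≤ α, w i ≤ α := by
  set rejected : Finset ι := {i | ∑ k with s i ≤ s k, w k ≤ α} with rejected_def
  obtain rejected_empty | rejected_nonempty := rejected.eq_empty_or_nonempty
  · simp [rejected_empty]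
  · obtain ⟨i, hi, s_min⟩ := rejected.exists_min_image s rejected_nonempty
    have rejected_subset : rejected ⊆ ({k | s i ≤ s k} : Finset ι) :=
      fun k hk => by simpa using s_min k hk
    have tail_le : ∑ k with s i ≤ s k, w k ≤ α := by simpa [rejected_def] using hi
    exact (Finset.sum_le_sum_of_subset rejected_subset).trans tail_le

theorem ennreal_tsum_pi_prod {D : Type*} {n : ℕ} (g : Fin n → D → ℝ≥0∞) :
    ∑' d : Fin n → D, ∏ k, g k (d k) = ∏ k, ∑' e, g k e := by
  induction n with
  | zero => simp
  | succ n ih =>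
    rw [← (Fin.consEquiv fun _ : Fin (n + 1) => D).tsum_eq, ENNReal.tsum_prod']
    simp only [Fin.consEquiv_apply, Fin.prod_univ_succ, Fin.cons_zero, Fin.cons_succ,
      ENNReal.tsum_mul_left, ENNReal.tsum_mul_right, ih fun k => g k.succ]

theorem ennreal_tsum_coe_eq_one {D : Type*} {f : D → ℝ≥0} (hf : ∑' d, f d = 1) :
    ∑' d, (f d : ℝ≥0∞) = 1 :=
  (ENNReal.toNNReal_eq_one_iff _).1 (NNReal.tsum_eq_toNNReal_tsum.symm.trans hf)

theorem nnreal_summable_of_tsum_eq_one {D : Type*} {f : D → ℝ≥0} (hf : ∑' d, f d = 1) :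
    Summable f :=
  ENNReal.tsum_coe_ne_top_iff_summable.1 (ennreal_tsum_coe_eq_one hf ▸ ENNReal.one_ne_top)

/-- A family of functions of a tuple, indexed by the positions of that tuple, is permutation
equivariant if relabelling the tuple relabels the family. This is how the weights and the rank
p-values express that they treat the original data set and its resamples alike. -/
def PermEquivariant {ι D β : Type*} (A : ι → (ι → D) → β) : Prop :=
  ∀ (σ : Equiv.Perm ι) (i : ι) (d : ι → D), A i (d ∘ σ) = A (σ i) d

theorem PermEquivariant.tsum_mul_comm {ι D R : Type*} [NonUnitalNonAssocSemiring R]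
    [TopologicalSpace R]
    {A B : ι → (ι → D) → R} (hA : PermEquivariant A) (hB : PermEquivariant B) (i j : ι) :
    ∑' d, A i d * B j d = ∑' d, A j d * B i d := by
  rw [← ((Equiv.swap i j).symm.arrowCongr (Equiv.refl D)).tsum_eq fun d => A i d * B j d]
  refine tsum_congr fun d => ?_
  change A i (d ∘ Equiv.swap i j) * B j (d ∘ Equiv.swap i j) = _
  rw [hA, hB, Equiv.swap_apply_left, Equiv.swap_apply_right]

section RandomizationTest

variable {D : Type*}

/-- A statistic `Z` of the data is resampling invariant if every resample of `d` that has positive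
probability under `q(· | d)` has the same value of `Z` as `d`. -/
def ResampleInvariant {β : Type*} (q : D → D → ℝ≥0) (Z : D → β) : Prop :=
  ∀ d e, 0 < q e d → Z e = Z d

/-- The p-value obtained by treating `d i` instead of `d 0` as the original data set: the total
weight of the upper tail of the statistic from `S (d i)`. -/
def rankPValue (q : D → D → ℝ≥0) (fhat : D → ℝ≥0) (m : ℕ) (S : D → ℝ)
    (i : Fin (m + 1)) (d : Fin (m + 1) → D) : ℝ≥0 :=
  ∑ k with S (d i) ≤ S (d k), weight q fhat m k d

/-- The weight of `d i` if the level-`α` test with `d i` as the original data set rejects, and `0`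
otherwise. -/
def rejectedWeight (q : D → D → ℝ≥0) (fhat : D → ℝ≥0) (m : ℕ) (S : D → ℝ) (α : ℝ≥0)
    (i : Fin (m + 1)) (d : Fin (m + 1) → D) : ℝ≥0 :=
  if rankPValue q fhat m S i d ≤ α then weight q fhat m i d else 0

variable (q : D → D → ℝ≥0) (f fhat : D → ℝ≥0) (m : ℕ) (S : D → ℝ)

theorem pValue_eq_rankPValue_zero (d : Fin (m + 1) → D) :
    pValue q fhat m S d = rankPValue q fhat m S 0 d := by
  simp only [pValue, rankPValue, Finset.sum_filter, mul_ite, mul_one, mul_zero]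

theorem permEquivariant_wNum : PermEquivariant (wNum q fhat m) := fun σ i d => by
  unfold wNum
  congr 1
  exact Finset.prod_equiv σ (fun k => by simp) fun _ _ => rfl

theorem permEquivariant_weight : PermEquivariant (weight q fhat m) := fun σ i d => by
  simp only [weight, permEquivariant_wNum q fhat m σ]
  rw [Equiv.sum_comp σ fun j => wNum q fhat m j d]

theorem permEquivariant_rankPValue : PermEquivariant (rankPValue q fhat m S) := fun σ i d => by
  simp only [rankPValue, permEquivariant_weight q fhat m σ, Function.comp_apply]
  exact Finset.sum_equiv σ (fun k => by simp) fun _ _ => rfl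

theorem permEquivariant_rejectedWeight (α : ℝ≥0) :
    PermEquivariant (rejectedWeight q fhat m S α) := fun σ i d => by
  simp only [rejectedWeight, permEquivariant_rankPValue q fhat m S σ,
    permEquivariant_weight q fhat m σ]

theorem sum_rejectedWeight_le (α : ℝ≥0) (d : Fin (m + 1) → D) :
    ∑ i, rejectedWeight q fhat m S α i d ≤ α := by
  simp only [rejectedWeight, ← Finset.sum_filter]
  exact sum_filter_upperTail_le (weight q fhat m · d) (S ∘ d) α

theorem jointLaw_cons (d : D) (b : Fin m → D) :
    jointLaw f q m (Fin.cons d b) = f d * ∏ k, q (b k) d := by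
  simp only [jointLaw, ← Finset.compl_singleton, ← Fin.image_succ_univ,
    Finset.prod_image (Fin.succ_injective m).injOn, Fin.cons_zero, Fin.cons_succ]

theorem tsum_jointLaw :
    ∑' d, (jointLaw f q m d : ℝ≥0∞) = ∑' d, (f d : ℝ≥0∞) * (∑' e, (q e d : ℝ≥0∞)) ^ m := by
  rw [← (Fin.consEquiv fun _ : Fin (m + 1) => D).tsum_eq, ENNReal.tsum_prod']
  refine tsum_congr fun d : D => ?_
  change ∑' b : Fin m → D, (jointLaw f q m (Fin.cons d b) : ℝ≥0∞) = _
  simp only [jointLaw_cons, ENNReal.coe_mul, ENNReal.ofNNReal_finsetProd,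
    ENNReal.tsum_mul_left, ennreal_tsum_pi_prod fun _ e => (q e d : ℝ≥0∞), Finset.prod_const,
    Finset.card_univ, Fintype.card_fin]

theorem weight_mul_sum_wNum (i : Fin (m + 1)) (d : Fin (m + 1) → D) :
    weight q fhat m i d * ∑ j, wNum q fhat m j d = wNum q fhat m i d :=
  div_mul_cancel_of_imp fun sum_eq_zero =>
    Finset.sum_eq_zero_iff.1 sum_eq_zero i (Finset.mem_univ i)

variable {q}

theorem ResampleInvariant.eq_of_wNum_ne_zero {β : Type*} {Z : D → β}
    (hZ : ResampleInvariant q Z) {i : Fin (m + 1)} {d : Fin (m + 1) → D}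
    (hi : wNum q fhat m i d ≠ 0) (j : Fin (m + 1)) : Z (d j) = Z (d i) := by
  obtain rfl | hji := eq_or_ne j i
  · rfl
  · have resample_ne_zero := Finset.prod_ne_zero_iff.1 (right_ne_zero_of_mul hi)
    exact hZ _ _ (pos_iff_ne_zero.2 (resample_ne_zero j (by simp [hji])))

theorem ResampleInvariant.weight_mul_sum_wNum_mul {G : D → ℝ≥0} (hG : ResampleInvariant q G)
    (i : Fin (m + 1)) (d : Fin (m + 1) → D) :
    weight q fhat m i d * ∑ j, wNum q (G * fhat) m j d = wNum q (G * fhat) m i d := by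
  have wNum_mul (j) : wNum q (G * fhat) m j d = G (d j) * wNum q fhat m j d := by
    simp only [wNum, Pi.mul_apply, mul_assoc]
  obtain hi | hi := eq_or_ne (wNum q fhat m i d) 0
  · simp [wNum_mul, weight, hi]
  · simp only [wNum_mul, hG.eq_of_wNum_ne_zero fhat m hi, ← Finset.mul_sum]
    rw [mul_left_comm, weight_mul_sum_wNum]

theorem ResampleInvariant.ite_pValue_le_jointLaw_eq {G : D → ℝ≥0} (hG : ResampleInvariant q G)
    (α : ℝ≥0) (d : Fin (m + 1) → D) :
    (if pValue q fhat m S d ≤ α then jointLaw (G * fhat) q m d else 0) =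
      ∑ j, rejectedWeight q fhat m S α 0 d * wNum q (G * fhat) m j d := by
  rw [← Finset.mul_sum, pValue_eq_rankPValue_zero, rejectedWeight, ite_mul, zero_mul,
    hG.weight_mul_sum_wNum_mul]
  rfl

theorem ResampleInvariant.tsum_ite_pValue_le_jointLaw_le {G : D → ℝ≥0}
    (hG : ResampleInvariant q G) (hq : ∀ d, ∑' e, (q e d : ℝ≥0∞) ≤ 1) (α : ℝ≥0) :
    ∑' d, ((if pValue q fhat m S d ≤ α then jointLaw (G * fhat) q m d else 0 : ℝ≥0) : ℝ≥0∞) ≤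
      α * ∑' d, ((G * fhat) d : ℝ≥0∞) := by
  have rejected_equivariant : PermEquivariant fun i d =>
      (rejectedWeight q fhat m S α i d : ℝ≥0∞) := fun σ i d =>
    congrArg _ (permEquivariant_rejectedWeight q fhat m S α σ i d)
  have wNum_equivariant : PermEquivariant fun i d => (wNum q (G * fhat) m i d : ℝ≥0∞) :=
    fun σ i d => congrArg _ (permEquivariant_wNum q (G * fhat) m σ i d)
  calc ∑' d, ((if pValue q fhat m S d ≤ α then jointLaw (G * fhat) q m d else 0 : ℝ≥0) : ℝ≥0∞)
      = ∑ j, ∑' d, (rejectedWeight q fhat m S α 0 d * wNum q (G * fhat) m j d : ℝ≥0∞) := by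
        simp only [hG.ite_pValue_le_jointLaw_eq, ENNReal.ofNNReal_finsetSum, ENNReal.coe_mul]
        exact Summable.tsum_finsetSum fun _ _ => ENNReal.summable
    _ = ∑ j, ∑' d, (rejectedWeight q fhat m S α j d * wNum q (G * fhat) m 0 d : ℝ≥0∞) :=
        Finset.sum_congr rfl fun j _ => rejected_equivariant.tsum_mul_comm wNum_equivariant 0 j
    _ = ∑' d, ((∑ j, rejectedWeight q fhat m S α j d : ℝ≥0) *
          jointLaw (G * fhat) q m d : ℝ≥0∞) := by
        simp only [ENNReal.ofNNReal_finsetSum, Finset.sum_mul]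
        exact (Summable.tsum_finsetSum fun _ _ => ENNReal.summable).symm
    _ ≤ ∑' d, (α * jointLaw (G * fhat) q m d : ℝ≥0∞) := by
        gcongr with d
        exact sum_rejectedWeight_le q fhat m S α d
    _ = α * ∑' d, ((G * fhat) d : ℝ≥0∞) * (∑' e, (q e d : ℝ≥0∞)) ^ m := by
        rw [ENNReal.tsum_mul_left, tsum_jointLaw]
    _ ≤ α * ∑' d, ((G * fhat) d : ℝ≥0∞) := by
        gcongr with d
        exact mul_le_of_le_one_right' (pow_le_one' (hq d) m)

variable {f fhat}

theorem conditional_conformal_validity_general {β : Type*} {G : D → ℝ≥0} {Z : D → β}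
    (hfG : f = G * fhat) (hG : ResampleInvariant q G) (hZ : ResampleInvariant q Z)
    (hf : Summable f) (hq : ∀ d, ∑' e, q e d = 1) (z : β) (α : ℝ≥0) :
    (∑' d, if pValue q fhat m S d ≤ α ∧ Z (d 0) = z then jointLaw f q m d else 0) ≤
      α * ∑' d, if Z d = z then f d else 0 := by
  subst hfG
  set H : D → ℝ≥0 := fun d => if Z d = z then G d else 0 with H_def
  have H_invariant : ResampleInvariant q H := fun d e hqe => by
    simp only [H_def, hZ d e hqe, hG d e hqe]
  have H_mul (d : D) : (H * fhat) d = if Z d = z then (G * fhat) d else 0 := by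
    simp only [H_def, Pi.mul_apply, ite_mul, zero_mul]
  have jointLaw_H (d : Fin (m + 1) → D) :
      jointLaw (H * fhat) q m d = if Z (d 0) = z then jointLaw (G * fhat) q m d else 0 := by
    simp only [jointLaw, H_mul, ite_mul, zero_mul]
  have H_summable : Summable (H * fhat) :=
    NNReal.summable_of_le (fun d => by rw [H_mul]; split_ifs <;> simp) hf
  simp only [ite_and, ← jointLaw_H, ← H_mul]
  rw [← ENNReal.coe_le_coe, ENNReal.coe_mul, ENNReal.coe_tsum H_summable,
    NNReal.tsum_eq_toNNReal_tsum]
  exact ENNReal.coe_toNNReal_le_self.trans <|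
    H_invariant.tsum_ite_pValue_le_jointLaw_le fhat m S
      (fun d => (ennreal_tsum_coe_eq_one (hq d)).le) α

end RandomizationTest

section Trajectory

variable {T : ℕ} (pC : C → ℝ≥0) (r : Y → C → X → ℝ≥0)

/-- The context-response likelihood `∏ₜ pC(cₜ) · r(yₜ; cₜ, xₜ)`, the factor of the data law that the
assignment likelihood `f̂` leaves out. -/
def envLik (d : Fin T → C × X × Y) : ℝ≥0 :=
  ∏ t, pC (d t).1 * r (d t).2.2 (d t).1 (d t).2.1

theorem statTrajLaw_eq_envLik_mul_assignLik
    (a : (t : Fin T) → X → C → (Fin (t : ℕ) → C × X × Y) → ℝ≥0) :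
    statTrajLaw pC a r = envLik pC r * assignLik a := by
  ext1 d
  simp only [statTrajLaw, envLik, assignLik, Pi.mul_apply, ← Finset.prod_mul_distrib,
    mul_right_comm]

theorem resampleInvariant_envLik {q : (Fin T → C × X × Y) → (Fin T → C × X × Y) → ℝ≥0}
    (hq : ∀ d e, 0 < q e d → ∃ π : Equiv.Perm (Fin T), ∀ t, e t = d (π t)) :
    ResampleInvariant q (envLik pC r) := fun d e hqe => by
  obtain ⟨π, hπ⟩ := hq d e hqe
  simp only [envLik, hπ]
  exact Equiv.prod_comp π fun t => pC (d t).1 * r (d t).2.2 (d t).1 (d t).2.1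

end Trajectory

/-- **(Conditional conformal validity, Remark 7.)** If moreover every positive-
probability resample preserves the final action `x_T`, then the p-value is valid
conditionally on the final action: for every `x` and `α ∈ [0,1]`,
`P(p ≤ α and X_T = x) ≤ α · P(X_T = x)`. -/
theorem conditional_conformal_validity
    [Countable C] [Countable X] [Countable Y]
    (T : ℕ) (hT : 0 < T)
    (pC : C → ℝ≥0)
    (a : (t : Fin T) → X → C → (Fin (t : ℕ) → C × X × Y) → ℝ≥0)
    (r : Y → C → X → ℝ≥0)
    (q : (Fin T → C × X × Y) → (Fin T → C × X × Y) → ℝ≥0)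
    (m : ℕ) (hm : 1 ≤ m)
    (S : (Fin T → C × X × Y) → ℝ)
    (hf : ∑' d, statTrajLaw pC a r d = 1)
    (hq : ∀ d, ∑' e, q e d = 1)
    (last : Fin T) (hlast : (last : ℕ) = T - 1)
    (hperm : ∀ d dtil, 0 < q dtil d →
      (∃ π : Equiv.Perm (Fin T), ∀ t, dtil t = d (π t)) ∧
        (dtil last).2.1 = (d last).2.1) :
    ∀ (x : X) (α : ℝ≥0), α ≤ 1 →
      (∑' dd : Fin (m + 1) → (Fin T → C × X × Y),
        if pValue q (assignLik a) m S dd ≤ α ∧ ((dd 0) last).2.1 = x then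
          jointLaw (statTrajLaw pC a r) q m dd
        else 0) ≤
      α * ∑' d : Fin T → C × X × Y,
            (if (d last).2.1 = x then statTrajLaw pC a r d else 0) :=
  fun x α _ => conditional_conformal_validity_general m S
    (statTrajLaw_eq_envLik_mul_assignLik pC r a)
    (resampleInvariant_envLik pC r fun d e h => (hperm d e h).1)
    (fun d e h => (hperm d e h).2) (nnreal_summable_of_tsum_eq_one hf) hq x α
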